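/- Let ζ₅ = e^{2πi/5} and let Λ ⊆ ℂ² be the ℤ-span of the four vectors (1,1), (ζ₅, ζ₅²), (ζ₅², ζ₅⁴), (ζ₅³, ζ₅). Then Λ is a ℤ-lattice in ℂ², the ℂ-linear map σ(z,w) = (ζ₅ z, ζ₅² w) satisfies σ(Λ) = Λ and has order 5, the induced map ⋀²(σ|_Λ) on ⋀²Λ has order 5, and there exists a generator vol of ⋀⁴Λ such that the fixed submodule {x ∈ ⋀²Λ : ⋀²(σ|_Λ)(x) = x}, with the restriction of the wedge form determined by vol, has rank 2 and is isometric to the lattice H₅ with Gram matrix [[2,1],[1,−2]]. -/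

import Mathlib

set_option synthInstance.maxHeartbeats 1000000
set_option maxHeartbeats 1000000

open ExteriorAlgebra Module Matrix

noncomputable section

/-- `Λ` is a `ℤ`-lattice in `ℂ²`: it is the `ℤ`-span of an `ℝ`-basis of `ℂ²`. -/
def IsComplexTorusLattice (Λ : Submodule ℤ (ℂ × ℂ)) : Prop :=
  ∃ b : Basis (Fin 4) ℝ (ℂ × ℂ), Λ = Submodule.span ℤ (Set.range b)

/-- The image of the `n`-th exterior power under the algebra morphism induced by a linear map
lands in the `n`-th exterior power. -/
lemma map_mem_exteriorPower {R M N : Type*} [CommRing R] [AddCommGroup M] [Module R M]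
    [AddCommGroup N] [Module R N] (f : M →ₗ[R] N) (n : ℕ) {x : ExteriorAlgebra R M}
    (hx : x ∈ ⋀[R]^n M) : ExteriorAlgebra.map f x ∈ ⋀[R]^n N := by
  rw [← ExteriorAlgebra.ιMulti_span_fixedDegree] at hx ⊢
  induction hx using Submodule.span_induction with
  | mem y hy =>
      obtain ⟨m, rfl⟩ := hy
      rw [ExteriorAlgebra.map_apply_ιMulti]
      exact Submodule.subset_span ⟨f ∘ m, rfl⟩
  | zero => simp
  | add a b _ _ ha hb => rw [map_add]; exact Submodule.add_mem _ ha hb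
  | smul r a _ ha => rw [_root_.map_smul]; exact Submodule.smul_mem _ r ha

/-- The `n`-th exterior power of a linear map. -/
def extPowMap {R M N : Type*} [CommRing R] [AddCommGroup M] [Module R M]
    [AddCommGroup N] [Module R N] (n : ℕ) (f : M →ₗ[R] N) : ⋀[R]^n M →ₗ[R] ⋀[R]^n N :=
  LinearMap.restrict (ExteriorAlgebra.map f).toLinearMap
    (fun _ hx => map_mem_exteriorPower f n hx)

/-- The automorphism `σ` of `ℂ²` maps the lattice `Λ` onto itself. -/
def PreservesLattice (σ : (ℂ × ℂ) ≃ₗ[ℂ] (ℂ × ℂ)) (Λ : Submodule ℤ (ℂ × ℂ)) : Prop :=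
  Λ.map ((σ.restrictScalars ℤ : (ℂ × ℂ) ≃ₗ[ℤ] (ℂ × ℂ)) : (ℂ × ℂ) →ₗ[ℤ] (ℂ × ℂ)) = Λ

/-- The restriction `σ|_Λ` of `σ` to the lattice `Λ`, as a `ℤ`-linear automorphism. -/
def latRestrict (σ : (ℂ × ℂ) ≃ₗ[ℂ] (ℂ × ℂ)) (Λ : Submodule ℤ (ℂ × ℂ))
    (h : PreservesLattice σ Λ) : ↥Λ ≃ₗ[ℤ] ↥Λ :=
  (σ.restrictScalars ℤ).ofSubmodules Λ Λ h

/-- The induced endomorphism `⋀²(σ|_Λ)` of `⋀²Λ`. -/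
def extSq (σ : (ℂ × ℂ) ≃ₗ[ℂ] (ℂ × ℂ)) (Λ : Submodule ℤ (ℂ × ℂ))
    (h : PreservesLattice σ Λ) : Module.End ℤ (⋀[ℤ]^2 ↥Λ) :=
  extPowMap 2 (latRestrict σ Λ h).toLinearMap

/-- The invariant lattice `T = {x ∈ ⋀²Λ : ⋀²(σ|_Λ)(x) = x}`. -/
def invLat (σ : (ℂ × ℂ) ≃ₗ[ℂ] (ℂ × ℂ)) (Λ : Submodule ℤ (ℂ × ℂ))
    (h : PreservesLattice σ Λ) : Submodule ℤ (⋀[ℤ]^2 ↥Λ) :=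
  LinearMap.ker (extSq σ Λ h - LinearMap.id)

/-- `b` is the wedge form on `⋀²Λ` determined by the generator `vol` of `⋀⁴Λ`, i.e.
`x ∧ y = b(x,y) • vol`. -/
def IsWedgeForm (Λ : Submodule ℤ (ℂ × ℂ)) (vol : ⋀[ℤ]^4 ↥Λ)
    (b : ⋀[ℤ]^2 ↥Λ →ₗ[ℤ] ⋀[ℤ]^2 ↥Λ →ₗ[ℤ] ℤ) : Prop :=
  ∀ x y : ⋀[ℤ]^2 ↥Λ, (x : ExteriorAlgebra ℤ ↥Λ) * (y : ExteriorAlgebra ℤ ↥Λ)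
    = b x y • (vol : ExteriorAlgebra ℤ ↥Λ)

/-- The restriction of the form `b` to the submodule `T` admits Gram matrix `G`
in some basis; i.e. `(T, b|_T)` is isometric to the lattice with Gram matrix `G`. -/
def HasGramMatrix {M : Type*} [AddCommGroup M] [Module ℤ M] (b : M →ₗ[ℤ] M →ₗ[ℤ] ℤ)
    (T : Submodule ℤ M) {n : ℕ} (G : Matrix (Fin n) (Fin n) ℤ) : Prop :=
  ∃ v : Basis (Fin n) ℤ ↥T, ∀ i j, b (v i : M) (v j : M) = G i j

/-- The exterior power of `f` sends `v₀ ∧ ⋯ ∧ vₙ₋₁` to `f v₀ ∧ ⋯ ∧ f vₙ₋₁`. -/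
lemma extPowMap_ιMulti {R M N : Type*} [CommRing R] [AddCommGroup M] [Module R M]
    [AddCommGroup N] [Module R N] (n : ℕ) (f : M →ₗ[R] N) (v : Fin n → M) :
    extPowMap n f (exteriorPower.ιMulti R n v) = exteriorPower.ιMulti R n (f ∘ v) :=
  Subtype.ext (ExteriorAlgebra.map_apply_ιMulti f v)

section Wedge

variable {R M : Type*} [CommRing R] [AddCommGroup M] [Module R M]

/-- The wedge product `x ∧ y` as an element of `⋀²M`. -/
def wedge (x y : M) : ⋀[R]^2 M := exteriorPower.ιMulti R 2 ![x, y]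

lemma coe_wedge (x y : M) : (wedge (R := R) x y : ExteriorAlgebra R M) = ι R x * ι R y := by
  simp [wedge, ExteriorAlgebra.ιMulti_apply]

lemma wedge_self (x : M) : wedge (R := R) x x = 0 :=
  Subtype.ext (by rw [coe_wedge]; exact ι_sq_zero x)

lemma wedge_swap (x y : M) : wedge (R := R) y x = -wedge x y :=
  Subtype.ext (by
    rw [Submodule.coe_neg, coe_wedge, coe_wedge]
    exact eq_neg_of_add_eq_zero_left (ι_add_mul_swap y x))

lemma wedge_add_right (x y z : M) : wedge (R := R) x (y + z) = wedge x y + wedge x z :=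
  Subtype.ext (by simp [coe_wedge, mul_add])

lemma wedge_neg_right (x y : M) : wedge (R := R) x (-y) = -wedge x y :=
  Subtype.ext (by simp [coe_wedge])

lemma extPowMap_wedge {N : Type*} [AddCommGroup N] [Module R N] (f : M →ₗ[R] N) (x y : M) :
    extPowMap 2 f (wedge x y) = wedge (f x) (f y) := by
  rw [wedge, extPowMap_ιMulti, wedge]
  congr 1
  ext i
  fin_cases i <;> rfl

/-- The linear form on `⋀²M` taking `x ∧ y` to the minor `xᵢyⱼ - xⱼyᵢ`. -/
def minor {I : Type*} (e : Basis I R M) (i j : I) : ⋀[R]^2 M →ₗ[R] R :=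
  exteriorPower.pairingDual R M 2 (exteriorPower.ιMulti R 2 ![e.coord i, e.coord j])

lemma minor_wedge {I : Type*} (e : Basis I R M) (i j : I) (x y : M) :
    minor e i j (wedge x y) = e.coord i x * e.coord j y - e.coord j x * e.coord i y := by
  rw [minor, wedge, exteriorPower.pairingDual_ιMulti_ιMulti, Matrix.det_fin_two]
  simp

lemma eq_sum_minor (e : Basis (Fin 4) R M) (x : ⋀[R]^2 M) :
    x = minor e 0 1 x • wedge (e 0) (e 1) + minor e 0 2 x • wedge (e 0) (e 2)
      + minor e 0 3 x • wedge (e 0) (e 3) + minor e 1 2 x • wedge (e 1) (e 2)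
      + minor e 1 3 x • wedge (e 1) (e 3) + minor e 2 3 x • wedge (e 2) (e 3) := by
  suffices h : LinearMap.id = (minor e 0 1).smulRight (wedge (e 0) (e 1))
      + (minor e 0 2).smulRight (wedge (e 0) (e 2)) + (minor e 0 3).smulRight (wedge (e 0) (e 3))
      + (minor e 1 2).smulRight (wedge (e 1) (e 2)) + (minor e 1 3).smulRight (wedge (e 1) (e 3))
      + (minor e 2 3).smulRight (wedge (e 2) (e 3)) by
    simpa using LinearMap.congr_fun h x
  refine exteriorPower.linearMap_ext (Basis.ext_alternating e fun v _ => ?_)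
  have hv : exteriorPower.ιMulti R 2 (fun i => e (v i)) = wedge (e (v 0)) (e (v 1)) := by
    rw [wedge]; congr 1; ext i; fin_cases i <;> rfl
  simp only [LinearMap.compAlternatingMap_apply, hv, LinearMap.id_apply, LinearMap.add_apply,
    LinearMap.smulRight_apply, minor_wedge]
  generalize v 0 = i
  generalize v 1 = j
  fin_cases i <;> fin_cases j <;>
    simp [wedge_self, wedge_swap (e 0) (e 1), wedge_swap (e 0) (e 2),
      wedge_swap (e 0) (e 3), wedge_swap (e 1) (e 2), wedge_swap (e 1) (e 3),
      wedge_swap (e 2) (e 3)]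

/-- The wedge product of a basis spans the top exterior power. -/
lemma span_ιMulti_basis {n : ℕ} (e : Basis (Fin n) R M) :
    Submodule.span R {exteriorPower.ιMulti R n e} = ⊤ := by
  have h : LinearMap.id = (exteriorPower.alternatingMapLinearEquiv e.det).smulRight
      (exteriorPower.ιMulti R n e) := by
    refine exteriorPower.linearMap_ext (Basis.ext_alternating e fun v hv => ?_)
    let τ : Equiv.Perm (Fin n) := Equiv.ofBijective v (Finite.injective_iff_bijective.1 hv)
    change exteriorPower.ιMulti R n (e ∘ τ) =
      exteriorPower.alternatingMapLinearEquiv e.det (exteriorPower.ιMulti R n (e ∘ τ)) •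
        exteriorPower.ιMulti R n e
    simp [exteriorPower.alternatingMapLinearEquiv_apply_ιMulti, AlternatingMap.map_perm,
      Basis.det_self]
  refine eq_top_iff.2 fun x _ => ?_
  rw [show x = _ from LinearMap.congr_fun h x]
  exact Submodule.smul_mem _ _ (Submodule.mem_span_singleton_self _)

lemma smul_ιMulti_basis_injective {n : ℕ} (e : Basis (Fin n) R M) :
    Function.Injective fun r : R => r • ExteriorAlgebra.ιMulti R n e := by
  intro r s h
  have h' : r • exteriorPower.ιMulti R n e = s • exteriorPower.ιMulti R n e := Subtype.ext h
  simpa [exteriorPower.alternatingMapLinearEquiv_apply_ιMulti, Basis.det_self] using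
    congrArg (exteriorPower.alternatingMapLinearEquiv e.det) h'

end Wedge

section CyclotomicAction

variable {M : Type*} [AddCommGroup M] (e : Basis (Fin 4) ℤ M)

/-- The invariant bivectors `e₀₁ + e₀₃ + e₂₃` and `e₀₂ + e₁₂ + e₁₃`. -/
def invVec : Fin 2 → ⋀[ℤ]^2 M :=
  ![wedge (e 0) (e 1) + wedge (e 0) (e 3) + wedge (e 2) (e 3),
    wedge (e 0) (e 2) + wedge (e 1) (e 2) + wedge (e 1) (e 3)]

lemma invVec_mul (i j : Fin 2) :
    (invVec e i : ExteriorAlgebra ℤ M) * (invVec e j : ExteriorAlgebra ℤ M)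
      = (!![2, 1; 1, -2] : Matrix (Fin 2) (Fin 2) ℤ) i j • ExteriorAlgebra.ιMulti ℤ 4 e := by
  have hs (i : Fin 4) : ι ℤ (e i) * ι ℤ (e i) = 0 := ι_sq_zero _
  have hs' (i : Fin 4) (x : ExteriorAlgebra ℤ M) : ι ℤ (e i) * (ι ℤ (e i) * x) = 0 := by
    rw [← mul_assoc, hs, zero_mul]
  have hc (i j : Fin 4) : ι ℤ (e i) * ι ℤ (e j) = -(ι ℤ (e j) * ι ℤ (e i)) :=
    eq_neg_of_add_eq_zero_left (ι_add_mul_swap _ _)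
  have hc' (i j : Fin 4) (x : ExteriorAlgebra ℤ M) :
      ι ℤ (e i) * (ι ℤ (e j) * x) = -(ι ℤ (e j) * (ι ℤ (e i) * x)) := by
    rw [← mul_assoc, hc, neg_mul, mul_assoc]
  have hvol : ExteriorAlgebra.ιMulti ℤ 4 e
      = ι ℤ (e 0) * (ι ℤ (e 1) * (ι ℤ (e 2) * ι ℤ (e 3))) := by
    simp [ExteriorAlgebra.ιMulti_apply, Matrix.vecTail, Function.comp_def]
  rw [hvol]
  fin_cases i <;> fin_cases j <;>
    simp [invVec, coe_wedge, mul_add, add_mul, mul_assoc, hs, hs', hc 2 1,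
      hc 3 1, hc 3 2, hc' 1 0, hc' 2 0, hc' 3 0, hc' 2 1, hc' 3 1, hc' 3 2, two_smul]

/-- `f` acts like multiplication by `ζ₅` in the basis `1, ζ₅, ζ₅², ζ₅³` of `ℤ[ζ₅]`. -/
structure IsCyclotomicAction (f : M →ₗ[ℤ] M) : Prop where
  map_zero : f (e 0) = e 1
  map_one : f (e 1) = e 2
  map_two : f (e 2) = e 3
  map_three : f (e 3) = -(e 0 + e 1 + e 2 + e 3)

variable {e} {f : M →ₗ[ℤ] M}

lemma minor_invVec (a b : ℤ) :
    minor e 0 1 (a • invVec e 0 + b • invVec e 1) = a ∧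
      minor e 0 2 (a • invVec e 0 + b • invVec e 1) = b := by
  simp [invVec, minor_wedge]

lemma linearIndependent_invVec : LinearIndependent ℤ (invVec e) := by
  refine (LinearIndependent.pair_iff (x := invVec e 0) (y := invVec e 1)).2
    fun a b h => ?_
  have := minor_invVec (e := e) a b
  rw [h, map_zero, map_zero] at this
  exact ⟨this.1.symm, this.2.symm⟩

lemma extPowMap_apply (hf : IsCyclotomicAction e f) (x : ⋀[ℤ]^2 M) :
    extPowMap 2 f x = minor e 0 1 x • wedge (e 1) (e 2) + minor e 0 2 x • wedge (e 1) (e 3)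
      + minor e 0 3 x • (wedge (e 0) (e 1) - wedge (e 1) (e 2) - wedge (e 1) (e 3))
      + minor e 1 2 x • wedge (e 2) (e 3)
      + minor e 1 3 x • (wedge (e 0) (e 2) + wedge (e 1) (e 2) - wedge (e 2) (e 3))
      + minor e 2 3 x • (wedge (e 0) (e 3) + wedge (e 1) (e 3) + wedge (e 2) (e 3)) := by
  conv_lhs => rw [eq_sum_minor e x]
  simp only [map_add, map_zsmul, extPowMap_wedge, hf.map_zero, hf.map_one, hf.map_two,
    hf.map_three, wedge_neg_right, wedge_add_right, wedge_self, wedge_swap (e 0) (e 1),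
    wedge_swap (e 0) (e 2), wedge_swap (e 0) (e 3), wedge_swap (e 1) (e 2),
    wedge_swap (e 1) (e 3), wedge_swap (e 2) (e 3)]
  module

lemma extPowMap_invVec (hf : IsCyclotomicAction e f) (i : Fin 2) :
    extPowMap 2 f (invVec e i) = invVec e i := by
  rw [extPowMap_apply hf]
  fin_cases i <;> simp [invVec, minor_wedge] <;> abel

lemma eq_of_extPowMap_eq_self (hf : IsCyclotomicAction e f) {x : ⋀[ℤ]^2 M}
    (hx : extPowMap 2 f x = x) :
    x = minor e 0 1 x • invVec e 0 + minor e 0 2 x • invVec e 1 := by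
  have h := extPowMap_apply hf x
  rw [hx] at h
  have h01 := congrArg (minor e 0 1) h
  have h02 := congrArg (minor e 0 2) h
  have h03 := congrArg (minor e 0 3) h
  have h12 := congrArg (minor e 1 2) h
  simp [minor_wedge] at h01 h02 h03 h12
  conv_lhs => rw [eq_sum_minor e x]
  rw [show minor e 0 3 x = minor e 0 1 x by omega, show minor e 2 3 x = minor e 0 1 x by omega,
    show minor e 1 3 x = minor e 0 2 x by omega, show minor e 1 2 x = minor e 0 2 x by omega]
  simp only [invVec, Matrix.cons_val_zero, Matrix.cons_val_one]
  module

lemma span_invVec (hf : IsCyclotomicAction e f) :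
    Submodule.span ℤ (Set.range (invVec e)) = LinearMap.ker (extPowMap 2 f - LinearMap.id) := by
  refine le_antisymm (Submodule.span_le.2 ?_) fun x hx => ?_
  · rintro _ ⟨i, rfl⟩
    simp [extPowMap_invVec hf]
  · rw [LinearMap.mem_ker, LinearMap.sub_apply, LinearMap.id_apply, sub_eq_zero] at hx
    rw [eq_of_extPowMap_eq_self hf hx]
    exact add_mem (Submodule.smul_mem _ _ (Submodule.subset_span ⟨0, rfl⟩))
      (Submodule.smul_mem _ _ (Submodule.subset_span ⟨1, rfl⟩))

lemma extPowMap_ne_one (hf : IsCyclotomicAction e f) :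
    (extPowMap 2 f : Module.End ℤ (⋀[ℤ]^2 M)) ≠ 1 := by
  intro h
  have h01 := congrArg (minor e 0 1) (LinearMap.congr_fun h (wedge (e 0) (e 1)))
  rw [extPowMap_wedge, hf.map_zero, hf.map_one] at h01
  simp [minor_wedge] at h01

lemma extPowMap_pow_five (h5 : ∀ x, f (f (f (f (f x)))) = x) :
    (extPowMap 2 f : Module.End ℤ (⋀[ℤ]^2 M)) ^ 5 = 1 := by
  refine exteriorPower.linearMap_ext (AlternatingMap.ext fun v => ?_)
  simp [pow_succ, extPowMap_ιMulti, Function.comp_def, h5]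

end CyclotomicAction

lemma linearIndependent_cyclotomic {ζ : ℂ} (hζ : IsPrimitiveRoot ζ 5) :
    LinearIndependent ℝ ![((1 : ℂ), (1 : ℂ)), (ζ, ζ ^ 2), (ζ ^ 2, ζ ^ 4), (ζ ^ 3, ζ)] := by
  have h5 := hζ.pow_eq_one
  have hconj : (starRingEnd ℂ) ζ = ζ ^ 4 := by
    rw [← Complex.inv_eq_conj (hζ.norm'_eq_one (by norm_num))]
    exact inv_eq_of_mul_eq_one_right (by rw [← h5]; ring)
  rw [Fintype.linearIndependent_iff]
  intro g hg
  simp only [Fin.sum_univ_four, Prod.ext_iff] at hg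
  simp at hg
  obtain ⟨e1, e2⟩ := hg
  have e4 := congrArg (starRingEnd ℂ) e1
  have e3 := congrArg (starRingEnd ℂ) e2
  simp [hconj] at e3 e4
  have hinj : Function.Injective fun i : Fin 4 => ζ ^ (i.val + 1) := fun i j hij => by
    have := hζ.pow_inj (by omega) (by omega) hij
    exact Fin.ext (by omega)
  have hdet := Matrix.det_vandermonde_ne_zero_iff.2 hinj
  have h0 := Matrix.eq_zero_of_mulVec_eq_zero (v := fun i => (g i : ℂ)) hdet (by
    ext i
    fin_cases i <;> simp [Matrix.mulVec, dotProduct, Fin.sum_univ_four, Matrix.vandermonde]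
    · linear_combination e1
    · linear_combination e2 + g 3 * ζ * h5
    · linear_combination e3 + (-g 1 * ζ ^ 3 - g 2 * ζ ^ 6 * (ζ ^ 5 + 1) + g 3 * ζ ^ 4) * h5
    · linear_combination e4)
  intro i
  simpa using congrFun h0 i

/-- Let `ζ₅ = exp(2πi/5)` and let `Λ` be the `ℤ`-span of `(1,1)`, `(ζ₅,ζ₅²)`, `(ζ₅²,ζ₅⁴)`,
`(ζ₅³,ζ₅)`. Then `Λ` is a lattice in `ℂ²`, the map `σ(z,w) = (ζ₅z, ζ₅²w)` preserves `Λ` and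
has order 5, the induced map on `⋀²Λ` has order 5, and for a suitable generator `vol` of
`⋀⁴Λ` the invariant lattice has rank 2 and is isometric to `H₅`. -/
theorem stmt_17 (ζ₅ : ℂ) (hζ : ζ₅ = Complex.exp (2 * Real.pi * Complex.I / 5))
    (Λ : Submodule ℤ (ℂ × ℂ))
    (hΛ : Λ = Submodule.span ℤ
        ({((1 : ℂ), (1 : ℂ)), (ζ₅, ζ₅ ^ 2), (ζ₅ ^ 2, ζ₅ ^ 4), (ζ₅ ^ 3, ζ₅)} : Set (ℂ × ℂ)))
    (σ : (ℂ × ℂ) ≃ₗ[ℂ] (ℂ × ℂ))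
    (hσ : ∀ z w : ℂ, σ (z, w) = (ζ₅ * z, ζ₅ ^ 2 * w)) :
    IsComplexTorusLattice Λ ∧
    PreservesLattice σ Λ ∧
    orderOf σ = 5 ∧
    ∀ (h : PreservesLattice σ Λ),
      orderOf (extSq σ Λ h) = 5 ∧
      ∃ vol : ⋀[ℤ]^4 ↥Λ, Submodule.span ℤ {vol} = ⊤ ∧
        ∀ b : ⋀[ℤ]^2 ↥Λ →ₗ[ℤ] ⋀[ℤ]^2 ↥Λ →ₗ[ℤ] ℤ, IsWedgeForm Λ vol b →
          Module.finrank ℤ ↥(invLat σ Λ h) = 2 ∧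
          HasGramMatrix b (invLat σ Λ h) !![2, 1; 1, -2] := by
  have hp : IsPrimitiveRoot ζ₅ 5 := hζ ▸ Complex.isPrimitiveRoot_exp 5 (by norm_num)
  have h5 := hp.pow_eq_one
  have hsum : 1 + ζ₅ + ζ₅ ^ 2 + ζ₅ ^ 3 + ζ₅ ^ 4 = 0 := by
    simpa [Finset.sum_range_succ] using hp.geom_sum_eq_zero (by norm_num)
  have : Fact (Nat.Prime 5) := ⟨Nat.prime_five⟩
  have hLI := linearIndependent_cyclotomic hp
  have hspan : Λ = Submodule.span ℤ (Set.range
      ![((1 : ℂ), (1 : ℂ)), (ζ₅, ζ₅ ^ 2), (ζ₅ ^ 2, ζ₅ ^ 4), (ζ₅ ^ 3, ζ₅)]) := by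
    rw [hΛ]
    congr 1
    ext x
    simp
    tauto
  clear hΛ
  have hσ5 (x : ℂ × ℂ) : σ (σ (σ (σ (σ x)))) = x := by
    obtain ⟨z, w⟩ := x
    simp only [hσ, Prod.mk.injEq]
    constructor
    · linear_combination z * h5
    · linear_combination w * (ζ₅ ^ 5 + 1) * h5
  refine ⟨?_, ?_, ?_, fun h => ?_⟩
  · refine ⟨basisOfLinearIndependentOfCardEqFinrank hLI (by simp), ?_⟩
    rw [coe_basisOfLinearIndependentOfCardEqFinrank, hspan]
  · have hle : Λ.map ((σ.restrictScalars ℤ : (ℂ × ℂ) ≃ₗ[ℤ] (ℂ × ℂ)) :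
        (ℂ × ℂ) →ₗ[ℤ] (ℂ × ℂ)) ≤ Λ := by
      have hm (i : Fin 4) :
          ![((1 : ℂ), (1 : ℂ)), (ζ₅, ζ₅ ^ 2), (ζ₅ ^ 2, ζ₅ ^ 4), (ζ₅ ^ 3, ζ₅)] i ∈ Λ :=
        hspan ▸ Submodule.subset_span (Set.mem_range_self i)
      conv_lhs => rw [hspan]
      rw [Submodule.map_span_le]
      rintro _ ⟨i, rfl⟩
      fin_cases i
      · convert hm 1 using 1
        simp [hσ]
      · convert hm 2 using 1
        simp [hσ]
        constructor <;> ring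
      · convert hm 3 using 1
        simp [hσ]
        exact ⟨by ring, by linear_combination ζ₅ * h5⟩
      · convert neg_mem (add_mem (add_mem (add_mem (hm 0) (hm 1)) (hm 2)) (hm 3)) using 1
        simp [hσ]
        exact ⟨by linear_combination hsum, by linear_combination hsum⟩
    have hmem {x : ℂ × ℂ} (hx : x ∈ Λ) : σ x ∈ Λ := hle ⟨x, hx, rfl⟩
    exact le_antisymm hle fun x hx => ⟨_, hmem (hmem (hmem (hmem hx))), hσ5 x⟩
  · refine orderOf_eq_prime (LinearEquiv.ext fun x => by simpa [pow_succ] using hσ5 x) fun h => ?_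
    have := congrArg Prod.fst (LinearEquiv.congr_fun h (1, 1))
    rw [hσ] at this
    exact hp.ne_one (by norm_num) (by simpa using this)
  · let e : Basis (Fin 4) ℤ Λ :=
      (Basis.span (hLI.restrict_scalars' ℤ)).map (LinearEquiv.ofEq _ _ hspan.symm)
    have he (i : Fin 4) : (e i : ℂ × ℂ) =
        ![((1 : ℂ), (1 : ℂ)), (ζ₅, ζ₅ ^ 2), (ζ₅ ^ 2, ζ₅ ^ 4), (ζ₅ ^ 3, ζ₅)] i := by
      simp [e, Basis.span_apply]
    have hcoe (x : Λ) : (((latRestrict σ Λ h).toLinearMap x : Λ) : ℂ × ℂ) = σ x := rfl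
    have hf : IsCyclotomicAction e (latRestrict σ Λ h).toLinearMap := by
      constructor <;> apply Subtype.ext <;> rw [hcoe] <;> simp [he, hσ]
      · constructor <;> ring
      · exact ⟨by ring, by linear_combination ζ₅ * h5⟩
      · exact ⟨by linear_combination hsum, by linear_combination hsum⟩
    refine ⟨orderOf_eq_prime (extPowMap_pow_five fun x => Subtype.ext (hσ5 x))
      (extPowMap_ne_one hf),
      exteriorPower.ιMulti ℤ 4 e, span_ιMulti_basis e, fun b hb => ?_⟩
    let v : Basis (Fin 2) ℤ (invLat σ Λ h) :=
      (Basis.span linearIndependent_invVec).map (LinearEquiv.ofEq _ _ (span_invVec hf))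
    have hv (i : Fin 2) : (v i : ⋀[ℤ]^2 Λ) = invVec e i := by
      simp only [v, Basis.map_apply, Basis.span_apply]
      rfl
    refine ⟨by simp [finrank_eq_card_basis v], v, fun i j => ?_⟩
    rw [hv, hv]
    exact smul_ιMulti_basis_injective e ((hb _ _).symm.trans (invVec_mul e i j))
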